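/- Let C be any conjugacy class of the complex reflection group W_n of type G(r,1,n) and let w ∈ C. Then there exists an element w′ ∈ C_min (the set of minimal length elements of C) such that w → w′. -/

import Mathlib

/-!
Elements are handled through words. If a word `x s` is reduced, then passing to `s x` is a step
`→ˢ`, because `ℓ(x) < ℓ(x s)` and `ℓ(s x)` is at most the length of the word; if it is not reduced,
the element is already shorter than the word. So a word reduces (`CRG.Red`) to all of its
rotations and to every word of the same element that is no longer, where reducing means reaching
the new element along `→` unless an element shorter than the original word is reached on the way.
By induction on the length, reaching a shorter element is always good enough.

* `CRG.exists_decomp` is the double coset decomposition of `W_{j+1}` with respect to `W_j`, with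
  control of the lengths. Combined with rotations it shows (`CRG.reduce_to_blocks`) that every word
  reduces to a product of blocks `s_m ⋯ s_1 t^c s_1 ⋯ s_m · s_{m+1} ⋯ s_{m+λ-1}`, one for each
  cycle, of length `λ` and colour `c`; the first factor is missing if `c = 0`.
* If a coloured block (`c ≠ 0`) stands directly after a longer coloured block or after a block of
  colour `0`, then the product of blocks reduces to a strictly shorter word
  (`CRG.shrinks_of_not_le`). Hence every element reaches one that has a reduced word which is a
  sorted product of blocks (`CRG.exists_sorted`): the coloured blocks by increasing length, then
  the others.
* The multiset of pairs `(λ, c)` is a conjugacy invariant (`CRG.perm_of_isConj`), read off from the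
  action of the group on `ℕ × ZMod r` by coloured permutations; and the length of a sorted product
  of blocks depends only on this multiset (`CRG.length_bw_perm`).

For minimality, let `w` reach the sorted product `w'` and let `u` be conjugate to `w`. Then `u`
reaches a sorted product `u'`, whose blocks are those of `w'` up to order, so
`ℓ(w') = ℓ(u') ≤ ℓ(u)`. No formula for the length function is needed.
-/

/-! ## The complex reflection group `W_n` of type `G(r,1,n)`.

Generators are indexed by natural numbers: index `0` is `t` and index `i`
(for `1 ≤ i ≤ n-1`) is `s_i`; generators with index `≥ n` are killed by a relator,
so this is a presentation of the complex reflection group of type `G(r,1,n)`. -/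

noncomputable section

namespace CRG

/-- The relators of the presentation of `G(r,1,n)`. -/
def rels (r n : ℕ) : Set (FreeGroup ℕ) :=
  {w | (w = FreeGroup.of 0 ^ r)
    ∨ (∃ i, 1 ≤ i ∧ i < n ∧ w = FreeGroup.of i ^ 2)
    ∨ (2 ≤ n ∧ w = FreeGroup.of 0 * FreeGroup.of 1 * FreeGroup.of 0 * FreeGroup.of 1 *
        (FreeGroup.of 1 * FreeGroup.of 0 * FreeGroup.of 1 * FreeGroup.of 0)⁻¹)
    ∨ (∃ i, 2 ≤ i ∧ i < n ∧ w = FreeGroup.of 0 * FreeGroup.of i *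
        (FreeGroup.of i * FreeGroup.of 0)⁻¹)
    ∨ (∃ i, 1 ≤ i ∧ i + 1 < n ∧ w = FreeGroup.of i * FreeGroup.of (i + 1) * FreeGroup.of i *
        (FreeGroup.of (i + 1) * FreeGroup.of i * FreeGroup.of (i + 1))⁻¹)
    ∨ (∃ i j, 1 ≤ i ∧ i + 1 < j ∧ j < n ∧ w = FreeGroup.of i * FreeGroup.of j *
        (FreeGroup.of j * FreeGroup.of i)⁻¹)
    ∨ (∃ i, n ≤ i ∧ w = FreeGroup.of i)}

/-- The complex reflection group of type `G(r,1,n)`. -/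
abbrev W (r n : ℕ) : Type := PresentedGroup (rels r n)

/-- The generator with index `m` : `t` for `m = 0`, `s_m` for `1 ≤ m ≤ n-1`. -/
def gen (r n : ℕ) (m : ℕ) : W r n := PresentedGroup.of m

/-- The product in `W r n` of a word, given as a list of generator indices. -/
def wprod (r n : ℕ) (l : List ℕ) : W r n := (l.map (gen r n)).prod

/-- The set of standard generators `S = {t, s_1, …, s_{n-1}}`. -/
def S (r n : ℕ) : Set (W r n) := {x | ∃ m, m < n ∧ x = gen r n m}

/-- The length of `w` : the minimal length of a word in `t, s_1, …, s_{n-1}`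
expressing `w`. -/
def ell (r n : ℕ) (w : W r n) : ℕ :=
  sInf {k | ∃ l : List ℕ, (∀ m ∈ l, m < n) ∧ l.length = k ∧ wprod r n l = w}

/-- `l` is a reduced expression of `w`. -/
def IsReducedWord (r n : ℕ) (l : List ℕ) (w : W r n) : Prop :=
  (∀ m ∈ l, m < n) ∧ wprod r n l = w ∧ l.length = ell r n w

/-- `w →ˢ w'` : `w' = s w s⁻¹` for `s ∈ S`, with `ℓ(w') ≤ ℓ(w)` and either
`ℓ(sw) < ℓ(w)` or `ℓ(w s⁻¹) < ℓ(w)`. -/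
def Step (r n : ℕ) (s w w' : W r n) : Prop :=
  s ∈ S r n ∧ w' = s * w * s⁻¹ ∧ ell r n w' ≤ ell r n w ∧
    (ell r n (s * w) < ell r n w ∨ ell r n (w * s⁻¹) < ell r n w)

/-- `w → w'` : a finite (possibly empty) chain of steps `→ˢ` with `s ∈ S`. -/
def Arrow (r n : ℕ) : W r n → W r n → Prop :=
  Relation.ReflTransGen (fun w w' => ∃ s, Step r n s w w')

variable {r n : ℕ}

/-! ### Generators and words -/

lemma gen_eq_one {i : ℕ} (h : n ≤ i) : gen r n i = 1 :=
  PresentedGroup.one_of_mem (rels := rels r n) (x := FreeGroup.of i)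
    (Or.inr (Or.inr (Or.inr (Or.inr (Or.inr (Or.inr ⟨i, h, rfl⟩))))))

lemma gen_sq {i : ℕ} (h : 1 ≤ i) : gen r n i * gen r n i = 1 := by
  by_cases hi : i < n
  · have := PresentedGroup.one_of_mem (rels := rels r n) (x := FreeGroup.of i ^ 2)
      (Or.inr (Or.inl ⟨i, h, hi, rfl⟩))
    rw [← pow_two]; exact this
  · simp [gen_eq_one (not_lt.mp hi)]

lemma gen_zero_pow : gen r n 0 ^ r = 1 := by
  have := PresentedGroup.one_of_mem (rels := rels r n) (x := FreeGroup.of 0 ^ r) (Or.inl rfl)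
  exact this

lemma gen_zero_one : gen r n 0 * gen r n 1 * gen r n 0 * gen r n 1 =
    gen r n 1 * gen r n 0 * gen r n 1 * gen r n 0 := by
  by_cases hi : 2 ≤ n
  · have := PresentedGroup.one_of_mem (rels := rels r n) (x := _)
      (Or.inr (Or.inr (Or.inl ⟨hi, rfl⟩)))
    exact mul_inv_eq_one.mp this
  · simp [gen_eq_one (n := n) (i := 1) (by omega)]

lemma gen_braid {i : ℕ} (h : 1 ≤ i) (h' : i + 1 < n) :
    gen r n i * gen r n (i + 1) * gen r n i = gen r n (i + 1) * gen r n i * gen r n (i + 1) := by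
  have := PresentedGroup.one_of_mem (rels := rels r n) (x := _)
      (Or.inr (Or.inr (Or.inr (Or.inr (Or.inl ⟨i, h, h', rfl⟩)))))
  exact mul_inv_eq_one.mp this

/-- Generators with non-adjacent indices commute. Indices `≥ n` give the identity, so no upper
bound is needed. -/
lemma gen_comm {i j : ℕ} (h : i + 1 < j) : Commute (gen r n i) (gen r n j) := by
  by_cases hj : j < n
  · rcases Nat.eq_zero_or_pos i with rfl | hi
    · have := PresentedGroup.one_of_mem (rels := rels r n) (x := _)
        (Or.inr (Or.inr (Or.inr (Or.inl ⟨j, by omega, hj, rfl⟩))))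
      exact mul_inv_eq_one.mp this
    · have := PresentedGroup.one_of_mem (rels := rels r n) (x := _)
        (Or.inr (Or.inr (Or.inr (Or.inr (Or.inr (Or.inl ⟨i, j, hi, h, hj, rfl⟩))))))
      exact mul_inv_eq_one.mp this
  · rw [gen_eq_one (not_lt.mp hj)]; exact Commute.one_right _

@[simp] lemma wprod_nil : wprod r n [] = 1 := rfl

@[simp] lemma wprod_cons (i : ℕ) (l : List ℕ) : wprod r n (i :: l) = gen r n i * wprod r n l := by
  simp [wprod]

@[simp] lemma wprod_append (l l' : List ℕ) :
    wprod r n (l ++ l') = wprod r n l * wprod r n l' := by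
  simp [wprod]

lemma wprod_replicate (c i : ℕ) : wprod r n (List.replicate c i) = gen r n i ^ c := by
  simp [wprod]

/-- Letters `≥ n` stand for the identity and may be dropped, so they are allowed in all words
below. -/
lemma wprod_filter (l : List ℕ) : wprod r n (l.filter (· < n)) = wprod r n l := by
  induction l with
  | nil => rfl
  | cons i l ih =>
    by_cases h : i < n
    · simp [h, ih]
    · simp [h, ih, gen_eq_one (not_lt.mp h)]

lemma ell_le (l : List ℕ) : ell r n (wprod r n l) ≤ l.length :=
  le_trans (b := (l.filter (· < n)).length)
    (Nat.sInf_le ⟨l.filter (· < n), by simp, rfl, wprod_filter l⟩) (List.length_filter_le _ _)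

/-- Inverses are not needed to express an element, since `t⁻¹ = t^(r-1)`. -/
lemma exists_word (hr : 1 ≤ r) (w : W r n) : ∃ l, wprod r n l = w := by
  have hw : w ∈ Subgroup.closure (Set.range (gen r n)) := by
    have := PresentedGroup.closure_range_of (rels r n)
    change w ∈ Subgroup.closure (Set.range PresentedGroup.of)
    rw [this]; trivial
  induction hw using Subgroup.closure_induction with
  | mem x hx => obtain ⟨i, rfl⟩ := hx; exact ⟨[i], by simp⟩
  | one => exact ⟨[], rfl⟩
  | mul x y _ _ hx hy =>
    obtain ⟨l, rfl⟩ := hx; obtain ⟨l', rfl⟩ := hy; exact ⟨l ++ l', by simp⟩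
  | inv x hx' hx =>
    obtain ⟨l, rfl⟩ := hx
    clear hx'
    induction l with
    | nil => exact ⟨[], by simp⟩
    | cons i l ih =>
      obtain ⟨l', hl'⟩ := ih
      rcases Nat.eq_zero_or_pos i with rfl | hi
      · refine ⟨l' ++ List.replicate (r - 1) 0, ?_⟩
        rw [wprod_append, hl', wprod_cons, mul_inv_rev, wprod_replicate]
        congr 1
        rw [eq_comm, inv_eq_iff_mul_eq_one, ← pow_succ', Nat.sub_add_cancel hr, gen_zero_pow]
      · refine ⟨l' ++ [i], ?_⟩
        rw [wprod_append, hl', wprod_cons, wprod_nil, mul_one, wprod_cons, mul_inv_rev]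
        congr 1
        rw [eq_comm, inv_eq_iff_mul_eq_one, gen_sq hi]

lemma exists_reduced (hr : 1 ≤ r) (w : W r n) : ∃ l, IsReducedWord r n l w := by
  obtain ⟨l, rfl⟩ := exists_word hr w
  obtain ⟨l', h1, h2, h3⟩ := Nat.sInf_mem
    (s := {k | ∃ l' : List ℕ, (∀ m ∈ l', m < n) ∧ l'.length = k ∧ wprod r n l' = wprod r n l})
    ⟨(l.filter (· < n)).length, l.filter (· < n), by simp, rfl, wprod_filter l⟩
  exact ⟨l', h1, h3, h2⟩

lemma Arrow.ell_le {w w' : W r n} (h : Arrow r n w w') : ell r n w' ≤ ell r n w := by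
  induction h with
  | refl => exact le_rfl
  | tail _ h ih => obtain ⟨s, hs⟩ := h; exact hs.2.2.1.trans ih

lemma Arrow.isConj {w w' : W r n} (h : Arrow r n w w') : IsConj w w' := by
  induction h with
  | refl => exact IsConj.refl _
  | tail _ h ih =>
    obtain ⟨s, hs⟩ := h
    exact ih.trans (isConj_iff.mpr ⟨s, hs.2.1.symm⟩)

/-! ### Reductions between words -/

/-- `w` reaches, along `→`, an element of length less than `k`. -/
def Drop (r n : ℕ) (w : W r n) (k : ℕ) : Prop := ∃ v, Arrow r n w v ∧ ell r n v < k

/-- The word `l` reduces to the word `l'`: the latter is no longer, and the element of `l` either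
reaches the element of `l'` along `→`, or reaches an element shorter than the word `l`. -/
def Red (r n : ℕ) (l l' : List ℕ) : Prop :=
  l'.length ≤ l.length ∧
    (Arrow r n (wprod r n l) (wprod r n l') ∨ Drop r n (wprod r n l) l.length)

lemma Red.trans {l l' l'' : List ℕ} (h : Red r n l l') (h' : Red r n l' l'') : Red r n l l'' := by
  refine ⟨h'.1.trans h.1, ?_⟩
  rcases h.2 with h2 | h2
  · rcases h'.2 with h3 | ⟨w, h3, h4⟩
    · exact Or.inl (Relation.ReflTransGen.trans h2 h3)
    · exact Or.inr ⟨w, Relation.ReflTransGen.trans h2 h3, h4.trans_le h.1⟩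
  · exact Or.inr h2

lemma Red.of_eq {l l' : List ℕ} (h : wprod r n l = wprod r n l') (hl : l'.length ≤ l.length) :
    Red r n l l' := ⟨hl, Or.inl (h ▸ Relation.ReflTransGen.refl)⟩

lemma Red.drop {l l' : List ℕ} (h : Red r n l l') (hl : l'.length < l.length) :
    Drop r n (wprod r n l) l.length :=
  h.2.elim (fun h => ⟨_, h, (CRG.ell_le l').trans_lt hl⟩) id

lemma Red.rot_one (x : List ℕ) (i : ℕ) : Red r n (x ++ [i]) (i :: x) := by
  refine ⟨by simp, ?_⟩
  by_cases hi : i < n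
  · by_cases hl : ell r n (wprod r n (x ++ [i])) < (x ++ [i]).length
    · exact Or.inr ⟨_, Relation.ReflTransGen.refl, hl⟩
    · have hl : ell r n (wprod r n (x ++ [i])) = x.length + 1 := by
        have := ell_le (r := r) (n := n) (x ++ [i])
        simp only [List.length_append, List.length_singleton] at *
        omega
      refine Or.inl (Relation.ReflTransGen.single
        ⟨gen r n i, ⟨i, hi, rfl⟩, by simp [mul_assoc], ?_, Or.inr ?_⟩)
      · rw [hl]; exact ell_le (i :: x)
      · rw [hl]
        have : wprod r n (x ++ [i]) * (gen r n i)⁻¹ = wprod r n x := by simp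
        rw [this]
        exact Nat.lt_succ_of_le (ell_le x)
  · refine (Red.of_eq ?_ (by simp)).2
    simp [gen_eq_one (not_lt.mp hi)]

/-- A word reduces to each of its cyclic rotations: moving the last letter of a reduced word to
the front is a step `→ˢ`, whatever the length of the result. -/
lemma Red.rot (x y : List ℕ) : Red r n (x ++ y) (y ++ x) := by
  induction y using List.reverseRecOn generalizing x with
  | nil => exact Red.of_eq (by simp) (by simp)
  | append_singleton y i ih =>
    have h1 : Red r n (x ++ (y ++ [i])) (i :: x ++ y) := by
      rw [← List.append_assoc]; exact Red.rot_one (x ++ y) i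
    simpa using h1.trans (ih (i :: x))

/-! ### Runs, and the double coset decomposition -/

lemma gen_comm' {i j : ℕ} (h : i + 1 < j ∨ j + 1 < i) : Commute (gen r n i) (gen r n j) :=
  h.elim gen_comm fun h => (gen_comm h).symm

lemma comm_wprod {g : W r n} {l : List ℕ} (h : ∀ i ∈ l, Commute g (gen r n i)) :
    Commute g (wprod r n l) := by
  induction l with
  | nil => exact Commute.one_right _
  | cons i l ih =>
    rw [wprod_cons]
    exact (h i (by simp)).mul_right (ih fun j hj => h j (by simp [hj]))

lemma wprod_comm_wprod {l l' : List ℕ}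
    (h : ∀ i ∈ l, ∀ j ∈ l', i + 1 < j ∨ j + 1 < i) : Commute (wprod r n l) (wprod r n l') :=
  comm_wprod fun j hj => (comm_wprod fun i hi => (gen_comm' (h i hi j hj)).symm).symm

/-- An ascending run conjugates each of its generators, except the last, to the next one. -/
lemma run_mul_gen {a k i : ℕ} (ha : 1 ≤ a) (hi : a ≤ i) (hik : i + 1 < a + k) (hn : a + k ≤ n) :
    wprod r n (List.range' a k) * gen r n i = gen r n (i + 1) * wprod r n (List.range' a k) := by
  obtain ⟨p, rfl⟩ := Nat.exists_eq_add_of_le hi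
  obtain ⟨q, rfl⟩ : ∃ q, k = p + (q + 2) := ⟨k - p - 2, by omega⟩
  rw [← List.range'_append_1, List.range'_succ, List.range'_succ]
  simp only [wprod_append, wprod_cons]
  have h1 : Commute (gen r n (a + p)) (wprod r n (List.range' (a + p + 1 + 1) q)) :=
    comm_wprod fun j hj => gen_comm' (by simp at hj; omega)
  have h2 : Commute (gen r n (a + p + 1)) (wprod r n (List.range' a p)) :=
    comm_wprod fun j hj => gen_comm' (by simp at hj; omega)
  have h3 := gen_braid (r := r) (n := n) (i := a + p) (by omega) (by omega)
  simp only [mul_assoc]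
  rw [← h1.eq, ← mul_assoc (gen r n (a + p + 1)) (wprod _ _ _), h2.eq]
  simp only [← mul_assoc]
  rw [mul_assoc (wprod _ _ _), mul_assoc (wprod _ _ _), h3]
  simp only [← mul_assoc]

lemma run_mul_wprod {a k : ℕ} {l : List ℕ} (ha : 1 ≤ a) (hl : ∀ i ∈ l, a ≤ i ∧ i + 1 < a + k)
    (hn : a + k ≤ n) :
    wprod r n (List.range' a k) * wprod r n l =
      wprod r n (l.map (· + 1)) * wprod r n (List.range' a k) := by
  induction l with
  | nil => simp
  | cons i l ih =>
    have h := hl i (by simp)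
    rw [List.map_cons, wprod_cons, wprod_cons, ← mul_assoc, run_mul_gen ha h.1 h.2 hn, mul_assoc,
      ih fun j hj => hl j (by simp [hj]), mul_assoc]

lemma map_succ_range' (a k : ℕ) : (List.range' a k).map (· + 1) = List.range' (a + 1) k := by
  induction k generalizing a with
  | zero => rfl
  | succ k ih => simp [List.range'_succ, ih]

lemma map_succ_reverse_range' (a k : ℕ) :
    (List.range' a k).reverse.map (· + 1) = (List.range' (a + 1) k).reverse := by
  rw [List.map_reverse, map_succ_range']

lemma run_cancel {l : List ℕ} (h : ∀ i ∈ l, 1 ≤ i) : wprod r n l * wprod r n l.reverse = 1 := by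
  induction l with
  | nil => simp
  | cons i l ih =>
    rw [List.reverse_cons, wprod_append, wprod_cons, mul_assoc, ← mul_assoc (wprod r n l),
      ih fun j hj => h j (by simp [hj])]
    simp [gen_sq (h i (by simp))]

/-- The word `s_m ⋯ s_1 t^c s_1 ⋯ s_m`, which acts as `t^c` on the coordinate `m` (counted
from `0`). -/
def Tw (m c : ℕ) : List ℕ :=
  (List.range' 1 m).reverse ++ List.replicate c 0 ++ List.range' 1 m

lemma Tw_add (m k c : ℕ) : Tw (m + k) c =
    (List.range' (m + 1) k).reverse ++ Tw m c ++ List.range' (m + 1) k := by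
  rw [Tw, Tw, ← List.range'_append_1, Nat.add_comm 1 m]
  simp

lemma Tw_succ (m c : ℕ) : Tw (m + 1) c = (m + 1) :: (Tw m c ++ [m + 1]) := by
  rw [Tw_add]; simp

lemma Tw_length (m c : ℕ) : (Tw m c).length = 2 * m + c := by
  simp [Tw]; omega

lemma mem_Tw {m c i : ℕ} (h : i ∈ Tw m c) : i ≤ m := by
  simp [Tw] at h; omega

lemma Tw_comm_high {m c i : ℕ} (h : m + 2 ≤ i) : Commute (gen r n i) (wprod r n (Tw m c)) :=
  comm_wprod fun j hj => gen_comm' (by have := mem_Tw hj; omega)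

/-- The colouring of the coordinate `m` commutes with the parabolic subgroup `W_m`. -/
lemma Tw_comm_low {m c : ℕ} (hm : m < n) {i : ℕ} (hi : i < m) :
    Commute (gen r n i) (wprod r n (Tw m c)) := by
  induction m with
  | zero => omega
  | succ m ih =>
    rcases Nat.lt_succ_iff_lt_or_eq.mp hi with him | rfl
    · rw [Tw_succ]
      have h1 : Commute (gen r n i) (gen r n (m + 1)) := gen_comm (by omega)
      simpa using h1.mul_right ((ih (by omega) him).mul_right h1)
    · rcases i with _ | i
      -- For `i = 0`: `s_1 t^c s_1 = (s_1 t s_1)^c`, and `s_1 t s_1` commutes with `t`.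
      · have hs : gen r n 1 * gen r n 1 = 1 := gen_sq le_rfl
        have hs' : (gen r n 1)⁻¹ = gen r n 1 := inv_eq_of_mul_eq_one_left hs
        have h0 : Commute (gen r n 0) (gen r n 1 * gen r n 0 * (gen r n 1)⁻¹) := by
          rw [hs']
          simpa [commute_iff_eq, mul_assoc] using gen_zero_one (r := r) (n := n)
        have h1 := h0.pow_right c
        rw [conj_pow, hs'] at h1
        simpa [Tw, wprod_replicate, mul_assoc] using h1
      · rw [Tw_succ, Tw_succ]
        have h1 : Commute (gen r n (i + 1 + 1)) (wprod r n (Tw i c)) := Tw_comm_high le_rfl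
        have h3 := gen_braid (r := r) (n := n) (i := i + 1) (by omega) (by omega)
        simp only [wprod_cons, wprod_append, wprod_nil, mul_one]
        generalize gen r n (i + 1) = a at *
        generalize gen r n (i + 1 + 1) = b at *
        generalize wprod r n (Tw i c) = T at *
        rw [commute_iff_eq]
        calc a * (b * (a * (T * a) * b)) = (a * b * a) * T * a * b := by simp only [mul_assoc]
          _ = b * a * (b * T) * a * b := by rw [h3]; simp only [mul_assoc]
          _ = b * a * T * (b * a * b) := by rw [h1.eq]; simp only [mul_assoc]
          _ = b * (a * (T * a) * b) * a := by rw [← h3]; simp only [mul_assoc]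

/-- Double coset decomposition of `W_{j+1}` with respect to `W_j`, with control of lengths: every word
in the generators of index `≤ j` equals one that is no longer and either has at most one letter
`j`, or ends in `s_j ⋯ s_1 t^a s_1 ⋯ s_j` and has no letter `j` before that. -/
lemma exists_decomp (hr : 1 ≤ r) {j : ℕ} (hj : j < n) (x : List ℕ) (hx : ∀ i ∈ x, i < j + 1) :
    (∃ x' : List ℕ, (∀ i ∈ x', i < j) ∧ wprod r n x = wprod r n x' ∧ x'.length ≤ x.length) ∨
    (1 ≤ j ∧ ∃ x' y : List ℕ, (∀ i ∈ x', i < j) ∧ (∀ i ∈ y, i < j) ∧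
      wprod r n x = wprod r n (x' ++ j :: y) ∧ (x' ++ j :: y).length ≤ x.length) ∨
    (∃ (x' : List ℕ) (a : ℕ), (∀ i ∈ x', i < j) ∧ 0 < a ∧ a < r ∧
      wprod r n x = wprod r n (x' ++ Tw j a) ∧ (x' ++ Tw j a).length ≤ x.length) := by
  induction j generalizing x with
  | zero =>
    have hx' : x = List.replicate x.length 0 :=
      List.eq_replicate_iff.mpr ⟨rfl, fun i hi => by have := hx i hi; omega⟩
    have h : wprod r n x = gen r n 0 ^ (x.length % r) := by
      rw [hx', wprod_replicate, List.length_replicate,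
        ← pow_mod_orderOf _ (x.length), ← pow_mod_orderOf _ (x.length % r),
        Nat.mod_mod_of_dvd _ (orderOf_dvd_of_pow_eq_one gen_zero_pow)]
    rcases Nat.eq_zero_or_pos (x.length % r) with h0 | h0
    · exact Or.inl ⟨[], by simp, by rw [h, h0]; rfl, by simp⟩
    · refine Or.inr (Or.inr ⟨[], x.length % r, by simp, h0, Nat.mod_lt _ hr, ?_, ?_⟩)
      · simp [Tw, wprod_replicate, h]
      · simp [Tw, Nat.mod_le]
  | succ j ihj =>
    induction x using List.reverseRecOn with
    | nil => exact Or.inl ⟨[], by simp, rfl, le_rfl⟩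
    | append_singleton x s ih =>
      have hs : s < j + 1 ∨ s = j + 1 := by have := hx s (by simp); omega
      have hsq : gen r n (j + 1) * gen r n (j + 1) = 1 := gen_sq (by omega)
      rcases ih fun i hi => hx i (by simp [hi]) with
        ⟨x', h1, h2, h3⟩ | ⟨-, x', y, h1, h2, h3, h4⟩ | ⟨x', a, h1, h2, h3, h4, h5⟩
      · rcases hs with hs | rfl
        · refine Or.inl ⟨x' ++ [s], ?_, by simp [h2], by simp [h3]⟩
          simp only [List.mem_append, List.mem_singleton]
          rintro i (hi | rfl)
          exacts [h1 i hi, hs]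
        · exact Or.inr (Or.inl ⟨by omega, x', [], h1, by simp, by simp [h2], by simp [h3]⟩)
      · simp only [List.length_append, List.length_cons] at h4
        rcases hs with hs | rfl
        · refine Or.inr (Or.inl ⟨by omega, x', y ++ [s], h1, ?_, by simp [h3, mul_assoc],
            by simp; omega⟩)
          simp only [List.mem_append, List.mem_singleton]
          rintro i (hi | rfl)
          exacts [h2 i hi, hs]
        · have hc : ∀ y' : List ℕ, (∀ i ∈ y', i < j) →
              gen r n (j + 1) * wprod r n y' = wprod r n y' * gen r n (j + 1) := fun y' hy' =>
            comm_wprod fun i hi => gen_comm' (by have := hy' i hi; omega)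
          have key : ∀ y', wprod r n y = wprod r n y' → wprod r n (x ++ [j + 1]) =
              wprod r n x' * (gen r n (j + 1) * wprod r n y' * gen r n (j + 1)) := by
            intro y' hy'
            simp [h3, hy', mul_assoc]
          rcases ihj (by omega) y h2 with
            ⟨y', g1, g2, g3⟩ | ⟨hj1, y', y'', g1, g2, g3, g4⟩ | ⟨y', a, g1, g2, g3, g4, g5⟩
          · refine Or.inl ⟨x' ++ y', ?_, ?_, by simp; omega⟩
            · simp only [List.mem_append]
              rintro i (hi | hi)
              exacts [h1 i hi, (g1 i hi).trans (by omega)]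
            · rw [key y' g2, hc y' g1, mul_assoc _ (gen r n _), hsq]
              simp
          · simp only [List.length_append, List.length_cons] at g4
            refine Or.inr (Or.inl ⟨by omega, x' ++ y' ++ [j], j :: y'', ?_, ?_, ?_, ?_⟩)
            · simp only [List.mem_append, List.mem_singleton]
              rintro i ((hi | hi) | rfl)
              exacts [h1 i hi, (g1 i hi).trans (by omega), by omega]
            · simp only [List.mem_cons]
              rintro i (rfl | hi)
              exacts [by omega, (g2 i hi).trans (by omega)]
            · have hb := gen_braid (r := r) (n := n) (i := j) hj1 hj
              rw [key _ g3]
              simp only [wprod_append, wprod_cons, wprod_nil, mul_one, mul_assoc] at hb ⊢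
              rw [← hc y'' g2, ← mul_assoc (gen r n (j + 1)), hc y' g1]
              simp only [← mul_assoc] at hb ⊢
              rw [mul_assoc (wprod r n x' * wprod r n y'), mul_assoc (wprod r n x' * wprod r n y'),
                ← hb]
              simp only [← mul_assoc]
            · simp; omega
          · simp only [List.length_append] at g5
            refine Or.inr (Or.inr ⟨x' ++ y', a, ?_, g2, g3, ?_, ?_⟩)
            · simp only [List.mem_append]
              rintro i (hi | hi)
              exacts [h1 i hi, (g1 i hi).trans (by omega)]
            · rw [key _ g4, Tw_succ]
              simp only [wprod_append, wprod_cons, wprod_nil, mul_one]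
              rw [← mul_assoc (gen r n (j + 1)), hc y' g1]
              simp only [mul_assoc]
            · simp [Tw_succ]; omega
      · simp only [List.length_append] at h5
        rcases hs with hs | rfl
        · refine Or.inr (Or.inr ⟨x' ++ [s], a, ?_, h2, h3, ?_, by simp; omega⟩)
          · simp only [List.mem_append, List.mem_singleton]
            rintro i (hi | rfl)
            exacts [h1 i hi, hs]
          · have := (Tw_comm_low (r := r) (c := a) hj hs).eq
            simp [h4, mul_assoc, this]
        · refine Or.inr (Or.inl ⟨by omega, x', Tw j a, h1, ?_, ?_, ?_⟩)
          · exact fun i hi => Nat.lt_succ_of_le (mem_Tw hi)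
          · simp [h4, Tw_succ, mul_assoc, hsq]
          · simp [Tw_succ] at h5 ⊢; omega

/-! ### Products of blocks -/

/-- The standard word of a block `b = (λ, c)`, standing for a cycle of length `λ` and colour `c`
on the coordinates `m, …, m + λ - 1`: it is `s_m ⋯ s_1 t^c s_1 ⋯ s_m · s_{m+1} ⋯ s_{m+λ-1}` if
`c ≠ 0`, and `s_{m+1} ⋯ s_{m+λ-1}` if `c = 0`. -/
def block (m : ℕ) (b : ℕ × ℕ) : List ℕ :=
  (if b.2 = 0 then [] else Tw m b.2) ++ List.range' (m + 1) (b.1 - 1)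

/-- The concatenation of the words of consecutive blocks, starting at coordinate `m`. -/
def bw : ℕ → List (ℕ × ℕ) → List ℕ
  | _, [] => []
  | m, b :: l => block m b ++ bw (m + b.1) l

/-- The number of coordinates covered by a list of blocks. -/
def size (l : List (ℕ × ℕ)) : ℕ := (l.map Prod.fst).sum

@[simp] lemma size_nil : size [] = 0 := rfl

@[simp] lemma size_cons (b : ℕ × ℕ) (l : List (ℕ × ℕ)) : size (b :: l) = b.1 + size l := by
  simp [size]

@[simp] lemma size_append (l l' : List (ℕ × ℕ)) : size (l ++ l') = size l + size l' := by
  simp [size]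

/-- All blocks are nonempty, with colours in `{0, …, r - 1}`. -/
def Valid (r : ℕ) (l : List (ℕ × ℕ)) : Prop := ∀ b ∈ l, 0 < b.1 ∧ b.2 < r

lemma bw_append (m : ℕ) (l l' : List (ℕ × ℕ)) :
    bw m (l ++ l') = bw m l ++ bw (m + size l) l' := by
  induction l generalizing m with
  | nil => simp [bw]
  | cons b l ih => simp [bw, ih, Nat.add_assoc]

lemma block_comm {m : ℕ} {b : ℕ × ℕ} (hm : m < n) {i : ℕ} (hi : i < m) :
    Commute (gen r n i) (wprod r n (block m b)) := by
  rw [block, wprod_append]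
  refine Commute.mul_right ?_ (comm_wprod fun j hj => gen_comm' (by simp at hj; omega))
  split_ifs
  · exact Commute.one_right _
  · exact Tw_comm_low hm hi

lemma bw_comm {m : ℕ} {l : List (ℕ × ℕ)} (hl : Valid r l) (hm : m + size l ≤ n) {i : ℕ}
    (hi : i < m) : Commute (gen r n i) (wprod r n (bw m l)) := by
  induction l generalizing m with
  | nil => exact Commute.one_right _
  | cons b l ih =>
    have hb := (hl b (by simp)).1
    rw [size_cons] at hm
    rw [bw, wprod_append]
    exact (block_comm (by omega) hi).mul_right
      (ih (fun b' hb' => hl b' (by simp [hb'])) (by omega) (by omega))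

lemma mem_bw {m : ℕ} {l : List (ℕ × ℕ)} (hl : Valid r l) {i : ℕ} (hi : i ∈ bw m l) :
    i < m + size l := by
  induction l generalizing m with
  | nil => simp [bw] at hi
  | cons b l ih =>
    have hb := (hl b (by simp)).1
    rw [size_cons]
    rw [bw, block, List.mem_append, List.mem_append] at hi
    rcases hi with (hi | hi) | hi
    · split_ifs at hi
      · simp at hi
      · have := mem_Tw hi; omega
    · simp at hi; omega
    · have := ih (fun b' hb' => hl b' (by simp [hb'])) hi
      omega

/-- Every word in the generators of `W_k` reduces to a product of blocks. The suffix `z` commutes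
with `W_k`; it collects the blocks that have already been split off. -/
lemma reduce_to_blocks (hr : 1 ≤ r) (k : ℕ) (hk : k ≤ n) (x : List ℕ) (hx : ∀ i ∈ x, i < k)
    (z : List ℕ) (hz : ∀ i < k, Commute (gen r n i) (wprod r n z)) :
    ∃ l, Valid r l ∧ size l = k ∧ Red r n (x ++ z) (bw 0 l ++ z) := by
  induction k using Nat.strong_induction_on generalizing x z with
  | _ k ih =>
  rcases Nat.eq_zero_or_pos k with rfl | hk0
  · refine ⟨[], by simp [Valid], rfl, ?_⟩
    obtain rfl : x = [] := List.eq_nil_iff_forall_not_mem.mpr fun i hi => by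
      have := hx i hi; omega
    exact Red.of_eq rfl le_rfl
  -- The last block is built from its right end: `x` uses only the letters `≤ j` and is followed
  -- by the run `s_{j+1} ⋯ s_{k-1}`.
  have inner : ∀ j, j < k → ∀ x : List ℕ, (∀ i ∈ x, i < j + 1) →
      ∃ l, Valid r l ∧ size l = k ∧
        Red r n (x ++ (List.range' (j + 1) (k - 1 - j) ++ z)) (bw 0 l ++ z) := by
    intro j
    induction j with
    | zero =>
      intro hj x hx
      rcases exists_decomp hr (hj.trans_le hk) x hx with
        ⟨x', h1, h2, h3⟩ | ⟨h, -⟩ | ⟨x', a, h1, h2, h3, h4, h5⟩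
      · obtain rfl : x' = [] := List.eq_nil_iff_forall_not_mem.mpr fun i hi => by
          have := h1 i hi; omega
        refine ⟨[(k, 0)], by simp [Valid]; omega, by simp, Red.of_eq ?_ ?_⟩
        · simp [h2, bw, block]
        · simp [bw, block]
      · omega
      · obtain rfl : x' = [] := List.eq_nil_iff_forall_not_mem.mpr fun i hi => by
          have := h1 i hi; omega
        refine ⟨[(k, a)], by simp [Valid]; omega, by simp, Red.of_eq ?_ ?_⟩
        · simp [h4, bw, block, h2.ne']
        · simp [bw, block, h2.ne'] at h5 ⊢; omega
    | succ j ihj =>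
      intro hj x hx
      -- Splitting off a finished block that occupies the coordinates `j + 1, …, k - 1`.
      have split : ∀ (x' : List ℕ) (c : ℕ), (∀ i ∈ x', i < j + 1) → c < r →
          wprod r n x * wprod r n (List.range' (j + 1 + 1) (k - 1 - (j + 1))) =
            wprod r n x' * wprod r n (block (j + 1) (k - (j + 1), c)) →
          (x' ++ block (j + 1) (k - (j + 1), c)).length ≤ x.length + (k - 1 - (j + 1)) →
          ∃ l, Valid r l ∧ size l = k ∧
            Red r n (x ++ (List.range' (j + 1 + 1) (k - 1 - (j + 1)) ++ z)) (bw 0 l ++ z) := by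
        intro x' c h1 hc h2 h3
        obtain ⟨l, g1, g2, g3⟩ := ih (j + 1) hj (by omega) x' h1
          (block (j + 1) (k - (j + 1), c) ++ z) (fun i hi => by
            rw [wprod_append]
            exact (block_comm (by omega) hi).mul_right (hz i (by omega)))
        refine ⟨l ++ [(k - (j + 1), c)], ?_, by simp [g2]; omega, ?_⟩
        · intro b hb
          rcases List.mem_append.mp hb with hb | hb
          · exact g1 b hb
          · obtain rfl := List.mem_singleton.mp hb
            exact ⟨by simp; omega, hc⟩
        · rw [bw_append, g2]
          refine (Red.of_eq ?_ ?_).trans (g3.trans (Red.of_eq ?_ ?_))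
          · simp only [wprod_append, ← mul_assoc, h2]
          · simp at h3 ⊢; omega
          · simp [bw]
          · simp [bw]
      rcases exists_decomp hr (hj.trans_le hk) x hx with
        ⟨x', h1, h2, h3⟩ | ⟨-, x', y, h1, h2, h3, h4⟩ | ⟨x', a, h1, h2, h3, h4, h5⟩
      · refine split x' 0 h1 hr ?_ ?_
        · rw [h2]; simp [block, Nat.sub_right_comm]
        · simp [block]; omega
      · obtain ⟨l, g1, g2, g3⟩ := ihj (by omega) (y ++ x') (by
          simp only [List.mem_append]
          rintro i (hi | hi)
          exacts [h2 i hi, h1 i hi])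
        refine ⟨l, g1, g2, Red.trans ?_ g3⟩
        have e : k - 1 - j = (k - 1 - (j + 1)) + 1 := by omega
        have hy1 : Commute (wprod r n y) (wprod r n (List.range' (j + 1 + 1) (k - 1 - (j + 1)))) :=
          wprod_comm_wprod fun i hi i' hi' => by
            have := h2 i hi
            simp at hi'; omega
        have hy2 : Commute (wprod r n y) (wprod r n z) :=
          (comm_wprod fun i hi => (hz i (by have := h2 i hi; omega)).symm).symm
        have hrot := Red.rot (r := r) (n := n)
          (x' ++ (List.range' (j + 1) (k - 1 - j) ++ z)) y
        refine Red.trans (Red.of_eq ?_ ?_) (hrot.trans (Red.of_eq ?_ ?_))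
        · rw [e, List.range'_succ]
          simp only [wprod_append, wprod_cons, h3, mul_assoc]
          rw [← hy2.eq, ← mul_assoc (wprod r n y), hy1.eq, mul_assoc]
        · rw [e, List.range'_succ]
          simp at h4 ⊢; omega
        · simp
        · simp
      · refine split x' a h1 h3 ?_ ?_
        · rw [h4]; simp [block, Nat.sub_right_comm, h2.ne', mul_assoc]
        · simp [block, h2.ne'] at h5 ⊢; omega
  obtain ⟨l, h1, h2, h3⟩ := inner (k - 1) (by omega) x (fun i hi => by have := hx i hi; omega)
  exact ⟨l, h1, h2, by simpa using h3⟩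

/-- Rotation past a commuting factor `g`: a word can be moved from the left end of the rest of the
product to its right end. -/
lemma Red.rot_comm {x y g : List ℕ} (h : Commute (wprod r n y) (wprod r n g)) :
    Red r n (y ++ x ++ g) (x ++ y ++ g) := by
  have h1 := Red.rot (r := r) (n := n) y (x ++ g)
  refine (Red.of_eq (by simp) (by simp)).trans (h1.trans (Red.of_eq ?_ ?_))
  · simp only [wprod_append, mul_assoc, h.eq]
  · simp; omega

/-! ### Shortening products of blocks that are out of order -/

/-- `l` reduces to a strictly shorter word. -/
def Shrinks (r n : ℕ) (l : List ℕ) : Prop := ∃ l', Red r n l l' ∧ l'.length < l.length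

lemma Red.shrinks {l l' : List ℕ} (h : Red r n l l') (h' : Shrinks r n l') : Shrinks r n l := by
  obtain ⟨l'', h1, h2⟩ := h'
  exact ⟨l'', h.trans h1, h2.trans_le h.1⟩

lemma comm_of_mem_range' {g : W r n} {b e : ℕ} (h : ∀ i, b ≤ i → i < b + e → Commute (gen r n i) g) :
    Commute (wprod r n (List.range' b e).reverse) g :=
  (comm_wprod fun i hi => by
    simp at hi; exact (h i (by omega) (by omega)).symm).symm

lemma range'_split {a b q : ℕ} (h : a ≤ b) (h' : b ≤ a + q) :
    List.range' a q = List.range' a (b - a) ++ List.range' b (a + q - b) := by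
  have := List.range'_append_1 (s := a) (m := b - a) (n := a + q - b)
  rw [show a + (b - a) = b by omega, show b - a + (a + q - b) = q by omega] at this
  exact this.symm

/-- A block of colour `0` followed by a coloured one can be shortened: the palindromic word
`s_b ⋯ s_{b+lam-1} ⋯ s_b` on the left is rotated through the long run `s_a ⋯ s_{a+q-1}`, its
indices growing by one each time, until it reaches the right end of the run and cancels there. -/
lemma shrinks_pos {a q lam : ℕ} (ha : 1 ≤ a) (hn : a + q ≤ n) (hlam : 1 ≤ lam) {T g : List ℕ}
    (hT : ∀ i, a + 1 ≤ i → Commute (gen r n i) (wprod r n T))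
    (hg : ∀ i, a ≤ i → i < a + q → Commute (gen r n i) (wprod r n g))
    (t b : ℕ) (hb : a ≤ b) (ht : b + lam + t = a + q) :
    Shrinks r n ((List.range' b (lam - 1) ++ (List.range' b lam).reverse) ++
      (T ++ List.range' a q) ++ g) := by
  have hug : Commute (wprod r n (List.range' b (lam - 1) ++ (List.range' b lam).reverse))
      (wprod r n g) := by
    refine (comm_wprod fun i hi => (hg i ?_ ?_).symm).symm <;> simp at hi <;> omega
  induction t generalizing b with
  | zero =>
    refine Red.shrinks (Red.rot_comm hug) ⟨T ++ List.range' a (b - a) ++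
      List.range' (b + 1) (lam - 1) ++ g, Red.of_eq ?_ ?_, ?_⟩
    · have h1 : wprod r n (List.range' b lam) * wprod r n (List.range' b (lam - 1)) =
          wprod r n (List.range' (b + 1) (lam - 1)) * wprod r n (List.range' b lam) := by
        rw [run_mul_wprod (by omega) (fun i hi => by simp at hi; omega) (by omega),
          map_succ_range']
      have h2 : wprod r n (List.range' b lam) * wprod r n (List.range' b lam).reverse = 1 :=
        run_cancel fun i hi => by simp at hi; omega
      rw [range'_split hb (by omega), show a + q - b = lam by omega]
      simp only [wprod_append, mul_assoc]
      rw [← mul_assoc (wprod r n (List.range' b lam)), h1, mul_assoc,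
        ← mul_assoc (wprod r n (List.range' b lam)) (wprod r n (List.range' b lam).reverse), h2,
        one_mul]
    · simp; omega
    · simp; omega
  | succ t ih =>
    refine Red.shrinks ((Red.rot_comm hug).trans (Red.of_eq ?_ ?_))
      (ih (b + 1) (by omega) (by omega) ?_)
    · have h1 : wprod r n (List.range' a q) *
            wprod r n (List.range' b (lam - 1) ++ (List.range' b lam).reverse) =
          wprod r n (List.range' (b + 1) (lam - 1) ++ (List.range' (b + 1) lam).reverse) *
            wprod r n (List.range' a q) := by
        rw [run_mul_wprod (by omega) (fun i hi => by simp at hi; omega) (by omega),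
          List.map_append, map_succ_range', map_succ_reverse_range']
      have h2 : Commute
          (wprod r n (List.range' (b + 1) (lam - 1) ++ (List.range' (b + 1) lam).reverse))
          (wprod r n T) := by
        refine (comm_wprod fun i hi => (hT i ?_).symm).symm
        simp at hi; omega
      rw [wprod_append, wprod_append, wprod_append T, mul_assoc (wprod r n T), h1,
        ← mul_assoc (wprod r n T), ← h2.eq]
      simp only [wprod_append, mul_assoc]
    · simp; omega
    · refine (comm_wprod fun i hi => (hg i ?_ ?_).symm).symm <;> simp at hi <;> omega

/-- The analogue of `shrinks_pos` for two coloured blocks: the descending run on the left is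
rotated through the long run `s_a ⋯ s_{a+q-1}`; each time it loses a letter to the run
`s_{a+1} ⋯ s_{a+p}` and its top index grows by one, until it reaches the end of the long run and
cancels. -/
lemma shrinks_col {a q : ℕ} (ha : 1 ≤ a) (hn : a + q ≤ n) {H g : List ℕ}
    (hH : ∀ i, a + 2 ≤ i → Commute (gen r n i) (wprod r n H))
    (hg : ∀ i, a ≤ i → i < a + q → Commute (gen r n i) (wprod r n g))
    (t b p e : ℕ) (hb : a + 1 ≤ b) (hbe : b + e = a + p) (ht : p + 1 + t = q) (hte : t ≤ e) :
    Shrinks r n ((List.range' b (e + 1)).reverse ++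
      (H ++ List.range' (a + 1) p ++ List.range' a q) ++ g) := by
  induction t generalizing b p e with
  | zero =>
    refine Red.shrinks (Red.rot_comm (comm_of_mem_range' fun i h1 h2 => hg i (by omega) (by omega)))
      ⟨H ++ List.range' (a + 1) p ++ List.range' a (b - a) ++ g, Red.of_eq ?_ ?_, ?_⟩
    · have h2 : wprod r n (List.range' b (e + 1)) * wprod r n (List.range' b (e + 1)).reverse = 1 :=
        run_cancel fun i hi => by simp at hi; omega
      rw [range'_split (a := a) (b := b) (q := q) (by omega) (by omega),
        show a + q - b = e + 1 by omega]
      simp only [wprod_append, mul_assoc]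
      rw [← mul_assoc (wprod r n (List.range' b (e + 1))), h2, one_mul]
    · simp; omega
    · simp; omega
  | succ t ih =>
    obtain ⟨e, rfl⟩ : ∃ e', e = e' + 1 := ⟨e - 1, by omega⟩
    refine Red.shrinks ((Red.rot_comm
      (comm_of_mem_range' fun i h1 h2 => hg i (by omega) (by omega))).trans (Red.of_eq ?_ ?_))
      (ih (b + 2) (p + 1) e (by omega) (by omega) (by omega) (by omega))
    · have h1 : wprod r n (List.range' a q) * wprod r n (List.range' b (e + 1 + 1)).reverse =
          wprod r n (List.range' (b + 1) (e + 1 + 1)).reverse * wprod r n (List.range' a q) := by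
        rw [run_mul_wprod (by omega) (fun i hi => by simp at hi; omega) (by omega),
          map_succ_reverse_range']
      have h2 : wprod r n (List.range' (a + 1) p) *
            wprod r n (List.range' (b + 1) (e + 1 + 1)).reverse =
          wprod r n (List.range' (b + 2) (e + 1)).reverse *
            wprod r n (List.range' (a + 1) (p + 1)) := by
        rw [← map_succ_reverse_range' (b + 1), ← run_mul_wprod (by omega)
          (fun i hi => by simp at hi; omega) (by omega), List.range'_1_concat,
          List.range'_1_concat (n := p)]
        simp [show b + 1 + (e + 1) = a + 1 + p by omega, mul_assoc]
      have h3 : Commute (wprod r n (List.range' (b + 2) (e + 1)).reverse) (wprod r n H) :=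
        comm_of_mem_range' fun i h1 h2 => hH i (by omega)
      simp only [wprod_append, mul_assoc]
      rw [← mul_assoc (wprod r n (List.range' a q)), h1, mul_assoc,
        ← mul_assoc (wprod r n (List.range' (a + 1) p)), h2]
      simp only [← mul_assoc]
      rw [h3.eq]
    · simp; omega

/-- The order in which blocks stand in a shortest word: coloured blocks by increasing length, then
the blocks of colour `0`. -/
def BlockLe (b₁ b₂ : ℕ × ℕ) : Prop := b₂.2 = 0 ∨ (b₁.2 ≠ 0 ∧ b₁.1 ≤ b₂.1)

/-- Two adjacent blocks that are out of order can be brought into the form treated by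
`shrinks_pos` or `shrinks_col`; the remaining blocks form the commuting factor `g`. -/
lemma shrinks_of_not_le {l₁ l₂ : List (ℕ × ℕ)} {b₁ b₂ : ℕ × ℕ}
    (hv : Valid r (l₁ ++ b₁ :: b₂ :: l₂)) (hs : size (l₁ ++ b₁ :: b₂ :: l₂) = n)
    (hle : ¬ BlockLe b₁ b₂) : Shrinks r n (bw 0 (l₁ ++ b₁ :: b₂ :: l₂)) := by
  obtain ⟨lam, c⟩ := b₁
  obtain ⟨mu, d⟩ := b₂
  have hlam : 0 < lam := (hv (lam, c) (by simp)).1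
  have hmu : 0 < mu := (hv (mu, d) (by simp)).1
  have hv1 : Valid r l₁ := fun b hb => hv b (by simp [hb])
  have hv2 : Valid r l₂ := fun b hb => hv b (by simp [hb])
  simp only [BlockLe, not_or, not_and, not_le] at hle
  obtain ⟨hd, hcd⟩ := hle
  simp only [size_append, size_cons] at hs
  set m := size l₁ with hm
  have hX : ∀ i ∈ bw 0 l₁, i < m := fun i hi => by simpa using mem_bw hv1 hi
  have hB : Commute (wprod r n (bw 0 l₁))
      (wprod r n (block m (lam, c)) * wprod r n (block (m + lam) (mu, d))) :=
    (comm_wprod fun i hi => ((block_comm (by omega) (hX i hi)).mul_right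
      (block_comm (by omega) (by have := hX i hi; omega))).symm).symm
  have hg : ∀ i, m + 1 ≤ i → i < m + 1 + (lam + mu - 1) →
      Commute (gen r n i) (wprod r n (bw 0 l₁ ++ bw (m + lam + mu) l₂)) := by
    intro i h1 h2
    rw [wprod_append]
    exact (comm_wprod fun j hj => gen_comm' (by have := hX j hj; omega)).mul_right
      (bw_comm hv2 (by omega) (by omega))
  have hC : List.range' (m + 1) (lam + mu - 1) =
      List.range' (m + 1) lam ++ List.range' (m + lam + 1) (mu - 1) := by
    rw [show m + lam + 1 = m + 1 + lam by omega, List.range'_append_1]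
    congr 1
    omega
  have hb2 : block (m + lam) (mu, d) = (List.range' (m + 1) lam).reverse ++
      (Tw m d ++ List.range' (m + 1) (lam + mu - 1)) := by
    simp [block, hd, Tw_add, hC]
  refine Red.shrinks (l' := block m (lam, c) ++ block (m + lam) (mu, d) ++
    (bw 0 l₁ ++ bw (m + lam + mu) l₂)) (Red.of_eq ?_ ?_) ?_
  · rw [bw_append]
    simp only [bw, wprod_append, Nat.zero_add, ← mul_assoc, ← hm]
    rw [mul_assoc (wprod r n (bw 0 l₁)), hB.eq]
  · rw [bw_append]
    simp only [bw, List.length_append, Nat.zero_add, ← hm]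
    omega
  generalize bw 0 l₁ ++ bw (m + lam + mu) l₂ = g at hg
  have hT : ∀ e i, m + 1 + 1 ≤ i → Commute (gen r n i) (wprod r n (Tw m e)) :=
    fun e i hi => Tw_comm_high hi
  rw [hb2]
  by_cases hc : c = 0
  · have := shrinks_pos (a := m + 1) (q := lam + mu - 1) (by omega) (by omega) hlam (hT d) hg
      (mu - 1) (m + 1) le_rfl (by omega)
    simpa [block, hc] using this
  · have hlt := hcd hc
    obtain ⟨L, rfl⟩ : ∃ L, lam = L + 2 := ⟨lam - 2, by omega⟩
    have := shrinks_col (H := Tw m c ++ (m + 1) :: Tw m d) (a := m + 1) (q := L + 2 + mu - 1)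
      (by omega) (by omega) (fun i hi => by
        rw [wprod_append, wprod_cons]
        exact (hT c i (by omega)).mul_right ((gen_comm' (by omega)).mul_right (hT d i (by omega))))
      hg (mu - 1) (m + 1 + 1) (L + 1) L le_rfl (by omega) (by omega) (by omega)
    refine Red.shrinks (Red.of_eq ?_ ?_) this
    · have h1 : wprod r n (List.range' (m + 1) (L + 1)) *
            wprod r n (List.range' (m + 1) (L + 2)).reverse =
          wprod r n (List.range' (m + 1 + 1) (L + 1)).reverse * (gen r n (m + 1) *
            wprod r n (List.range' (m + 1 + 1) (L + 1))) := by
        rw [← wprod_cons (m + 1), ← List.range'_succ, ← map_succ_reverse_range' (m + 1),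
          ← run_mul_wprod (by omega) (fun i hi => by simp at hi; omega) (by omega),
          List.range'_1_concat (n := L + 1)]
        simp [mul_assoc]
      have h2 : Commute (wprod r n (List.range' (m + 1 + 1) (L + 1)).reverse)
          (wprod r n (Tw m c)) :=
        comm_of_mem_range' fun i h1 _ => hT c i h1
      have h3 : Commute (wprod r n (List.range' (m + 1 + 1) (L + 1))) (wprod r n (Tw m d)) :=
        (comm_wprod fun i hi => (hT d i (by simp at hi; omega)).symm).symm
      have e : block m (L + 2, c) = Tw m c ++ List.range' (m + 1) (L + 1) := by simp [block, hc]
      rw [e]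
      simp only [wprod_append, wprod_cons, mul_assoc]
      rw [← mul_assoc (wprod r n (List.range' (m + 1) (L + 1))), h1]
      simp only [← mul_assoc]
      rw [← h2.eq]
      simp only [mul_assoc]
      rw [← mul_assoc (wprod r n (List.range' (m + 1 + 1) (L + 1))), h3.eq]
      simp only [mul_assoc]
    · simp [block, hc]; omega

lemma exists_adjacent {l : List (ℕ × ℕ)} (h : ¬ l.Pairwise BlockLe) :
    ∃ l₁ b₁ b₂ l₂, l = l₁ ++ b₁ :: b₂ :: l₂ ∧ ¬ BlockLe b₁ b₂ := by
  have : IsTrans (ℕ × ℕ) BlockLe := ⟨fun a b c hab hbc => by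
    unfold BlockLe at *; omega⟩
  rw [← List.isChain_iff_pairwise, List.isChain_iff_forall_rel_of_append_cons_cons] at h
  push Not at h
  obtain ⟨b₁, b₂, l₁, l₂, h1, h2⟩ := h
  exact ⟨l₁, b₁, b₂, l₂, h1, h2⟩

/-- Every element reaches, along `→`, an element with a reduced word that is a product of sorted
blocks. -/
lemma exists_sorted (hr : 1 ≤ r) (w : W r n) :
    ∃ l, Valid r l ∧ size l = n ∧ l.Pairwise BlockLe ∧ Arrow r n w (wprod r n (bw 0 l)) ∧
      ell r n (wprod r n (bw 0 l)) = (bw 0 l).length := by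
  induction hk : ell r n w using Nat.strong_induction_on generalizing w with
  | _ k ih =>
  subst hk
  have descend : Drop r n w (ell r n w) →
      ∃ l, Valid r l ∧ size l = n ∧ l.Pairwise BlockLe ∧ Arrow r n w (wprod r n (bw 0 l)) ∧
        ell r n (wprod r n (bw 0 l)) = (bw 0 l).length := by
    rintro ⟨w', h1, h2⟩
    obtain ⟨l, g1, g2, g3, g4, g5⟩ := ih _ h2 w' rfl
    exact ⟨l, g1, g2, g3, Relation.ReflTransGen.trans h1 g4, g5⟩
  obtain ⟨x, hx1, hx2, hx3⟩ := exists_reduced hr w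
  obtain ⟨l, h1, h2, h3⟩ := reduce_to_blocks hr n le_rfl x hx1 [] (fun i _ => Commute.one_right _)
  rw [List.append_nil, List.append_nil] at h3
  have h4 := h3.1
  rcases h3.2 with h3 | h3
  swap
  · rw [hx2, hx3] at h3; exact descend h3
  rw [hx2] at h3
  rw [hx3] at h4
  have hle := ell_le (r := r) (n := n) (bw 0 l)
  by_cases hlt : ell r n (wprod r n (bw 0 l)) < ell r n w
  · exact descend ⟨_, h3, hlt⟩
  by_cases hp : l.Pairwise BlockLe
  · exact ⟨l, h1, h2, hp, h3, by omega⟩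
  · obtain ⟨l₁, b₁, b₂, l₂, rfl, hb⟩ := exists_adjacent hp
    obtain ⟨l', g1, g2⟩ := shrinks_of_not_le h1 h2 hb
    obtain ⟨w', g3, g4⟩ := g1.drop g2
    exact descend ⟨w', Relation.ReflTransGen.trans h3 g3, g4.trans_le h4⟩

/-! ### The cycle type as a conjugacy invariant -/

/-- The permutation of `ℕ × ZMod r` by which `t` acts: it adds `1` to the colour of the
coordinate `0`. -/
def tPerm (r : ℕ) : Equiv.Perm (ℕ × ZMod r) where
  toFun x := (x.1, if x.1 = 0 then x.2 + 1 else x.2)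
  invFun x := (x.1, if x.1 = 0 then x.2 - 1 else x.2)
  left_inv x := by ext <;> simp; split_ifs <;> simp
  right_inv x := by ext <;> simp; split_ifs <;> simp

/-- The permutation of `ℕ × ZMod r` by which `s_i` acts: it swaps the coordinates `i - 1`
and `i`. -/
def sPerm (r i : ℕ) : Equiv.Perm (ℕ × ZMod r) :=
  Equiv.prodCongr (Equiv.swap (i - 1) i) (Equiv.refl _)

/-- The action of the generator of index `i`. Coordinates are counted from `0`, and those `≥ n` are
fixed. -/
def genPerm (r n i : ℕ) : Equiv.Perm (ℕ × ZMod r) :=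
  if n ≤ i then 1 else if i = 0 then tPerm r else sPerm r i

lemma tPerm_apply (x : ℕ × ZMod r) : tPerm r x = (x.1, if x.1 = 0 then x.2 + 1 else x.2) := rfl

lemma sPerm_apply (i : ℕ) (x : ℕ × ZMod r) :
    sPerm r i x = (if x.1 = i - 1 then i else if x.1 = i then i - 1 else x.1, x.2) := by
  ext <;> simp [sPerm, Equiv.swap_apply_def]

lemma tPerm_pow_apply (k : ℕ) (x : ℕ × ZMod r) :
    (tPerm r ^ k) x = (x.1, if x.1 = 0 then x.2 + k else x.2) := by
  induction k with
  | zero => ext <;> simp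
  | succ k ih =>
    rw [pow_succ', Equiv.Perm.mul_apply, ih, tPerm_apply]
    ext
    · rfl
    · simp only; split_ifs <;> simp [add_assoc]

lemma genPerm_of_le {i : ℕ} (h : n ≤ i) : genPerm r n i = 1 := by simp [genPerm, h]

lemma genPerm_zero (h : 1 ≤ n) : genPerm r n 0 = tPerm r := by
  simp [genPerm]; omega

lemma genPerm_pos {i : ℕ} (h : i < n) (h' : 1 ≤ i) : genPerm r n i = sPerm r i := by
  rw [genPerm, if_neg (by omega), if_neg (by omega)]

lemma sPerm_sq (i : ℕ) : sPerm r i ^ 2 = 1 := by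
  ext x <;> simp [pow_two, sPerm]

lemma tPerm_sPerm_one : tPerm r * sPerm r 1 * tPerm r * sPerm r 1 =
    sPerm r 1 * tPerm r * sPerm r 1 * tPerm r := by
  apply Equiv.ext
  rintro ⟨_ | _ | k, a⟩ <;> simp [sPerm_apply, tPerm_apply]

lemma tPerm_sPerm_comm {i : ℕ} (h : 2 ≤ i) : tPerm r * sPerm r i = sPerm r i * tPerm r := by
  apply Equiv.ext
  rintro ⟨k, a⟩
  simp only [Equiv.Perm.mul_apply, sPerm_apply, tPerm_apply]
  by_cases h1 : k = i - 1
  · rw [if_pos h1, if_neg (by omega), if_neg (by omega)]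
  · by_cases h2 : k = i
    · rw [if_neg h1, if_pos h2, if_neg (by omega), if_neg (by omega)]
    · rw [if_neg h1, if_neg h2]

lemma sPerm_braid {i : ℕ} (h : 1 ≤ i) : sPerm r i * sPerm r (i + 1) * sPerm r i =
    sPerm r (i + 1) * sPerm r i * sPerm r (i + 1) := by
  have h1 : Equiv.swap (i - 1) i * Equiv.swap i (i + 1) * Equiv.swap (i - 1) i =
      Equiv.swap i (i + 1) * Equiv.swap (i - 1) i * Equiv.swap i (i + 1) := by
    rw [Equiv.swap_mul_swap_mul_swap (by omega) (by omega), Equiv.swap_comm (i - 1) i,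
      Equiv.swap_comm i (i + 1), Equiv.swap_mul_swap_mul_swap (by omega) (by omega),
      Equiv.swap_comm]
  ext x
  · simpa [sPerm] using congrArg (fun f => f x.1) h1
  · simp [sPerm]

lemma sPerm_comm {i j : ℕ} (h : 1 ≤ i) (hij : i + 1 < j) :
    sPerm r i * sPerm r j = sPerm r j * sPerm r i := by
  have h1 : Equiv.swap (i - 1) i * Equiv.swap (j - 1) j =
      Equiv.swap (j - 1) j * Equiv.swap (i - 1) i := by
    refine (Equiv.Perm.Disjoint.commute fun x => ?_).eq
    by_cases hx : x = i - 1 ∨ x = i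
    · exact Or.inr (Equiv.swap_apply_of_ne_of_ne (by omega) (by omega))
    · exact Or.inl (Equiv.swap_apply_of_ne_of_ne (by omega) (by omega))
  ext x
  · simpa [sPerm] using congrArg (fun f => f x.1) h1
  · simp [sPerm]

/-- The action of `W_n` on `ℕ × ZMod r` by coloured permutations. -/
def rep (r n : ℕ) : W r n →* Equiv.Perm (ℕ × ZMod r) :=
  PresentedGroup.toGroup (f := genPerm r n) (by
    rintro w (rfl | ⟨i, h1, h2, rfl⟩ | ⟨h, rfl⟩ | ⟨i, h1, h2, rfl⟩ | ⟨i, h1, h2, rfl⟩ |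
      ⟨i, j, h1, h2, h3, rfl⟩ | ⟨i, h, rfl⟩)
    · rw [map_pow, FreeGroup.lift_apply_of]
      by_cases h : 1 ≤ n
      · rw [genPerm_zero h]
        ext x <;> simp [tPerm_pow_apply]
      · rw [genPerm_of_le (by omega), one_pow]
    · rw [map_pow, FreeGroup.lift_apply_of, genPerm_pos h2 h1, sPerm_sq]
    · simp only [map_mul, map_inv, FreeGroup.lift_apply_of, mul_inv_eq_one]
      rw [genPerm_zero (by omega), genPerm_pos (i := 1) (by omega) le_rfl, tPerm_sPerm_one]
    · simp only [map_mul, map_inv, FreeGroup.lift_apply_of, mul_inv_eq_one]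
      rw [genPerm_zero (by omega), genPerm_pos h2 (by omega), tPerm_sPerm_comm h1]
    · simp only [map_mul, map_inv, FreeGroup.lift_apply_of, mul_inv_eq_one]
      rw [genPerm_pos (i := i) (by omega) h1, genPerm_pos h2 (by omega), sPerm_braid h1]
    · simp only [map_mul, map_inv, FreeGroup.lift_apply_of, mul_inv_eq_one]
      rw [genPerm_pos (i := i) (by omega) h1, genPerm_pos h3 (by omega), sPerm_comm h1 h2]
    · rw [FreeGroup.lift_apply_of, genPerm_of_le h])

@[simp] lemma rep_gen (i : ℕ) : rep r n (gen r n i) = genPerm r n i :=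
  PresentedGroup.toGroup.of _

/-- `g` commutes with the simultaneous shift of all colours and preserves the first `n`
coordinates. -/
def Equivariant (n : ℕ) (g : Equiv.Perm (ℕ × ZMod r)) : Prop :=
  (∀ k a e, g (k, a + e) = ((g (k, a)).1, (g (k, a)).2 + e)) ∧ ∀ x, x.1 < n → (g x).1 < n

lemma equivariant_rep (hr : 1 ≤ r) (w : W r n) : Equivariant n (rep r n w) := by
  obtain ⟨l, rfl⟩ := exists_word hr w
  induction l with
  | nil => simp [Equivariant]
  | cons i l ih =>
    rw [wprod_cons, map_mul, rep_gen]
    have hi : Equivariant n (genPerm r n i) := by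
      by_cases hn : n ≤ i
      · simp [genPerm_of_le hn, Equivariant]
      rcases Nat.eq_zero_or_pos i with rfl | h
      · rw [genPerm_zero (by omega)]
        refine ⟨fun k a e => ?_, fun x hx => by simpa [tPerm_apply] using hx⟩
        simp only [tPerm_apply]
        split_ifs <;> simp [add_right_comm]
      · rw [genPerm_pos (by omega) h]
        refine ⟨fun k a e => by simp [sPerm_apply], fun x hx => ?_⟩
        simp only [sPerm_apply]
        split_ifs <;> omega
    refine ⟨fun k a e => ?_, fun x hx => ?_⟩
    · simp only [Equiv.Perm.mul_apply, ih.1 k a e]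
      exact hi.1 _ _ _
    · exact hi.2 _ (ih.2 x hx)

/-- The coordinate of `x` lies on a cycle of `g` of length `b.1`, and going once around that cycle
adds `b.2` to the colour. -/
def OnCycle (g : Equiv.Perm (ℕ × ZMod r)) (b : ℕ × ℕ) (x : ℕ × ZMod r) : Prop :=
  0 < b.1 ∧ (g ^ b.1) x = (x.1, x.2 + b.2) ∧ ∀ j, 0 < j → j < b.1 → ((g ^ j) x).1 ≠ x.1

lemma OnCycle.unique {g : Equiv.Perm (ℕ × ZMod r)} {b b' : ℕ × ℕ} {x : ℕ × ZMod r}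
    (hb : b.2 < r) (hb' : b'.2 < r) (h : OnCycle g b x) (h' : OnCycle g b' x) : b = b' := by
  have h1 : b.1 = b'.1 := by
    rcases lt_trichotomy b.1 b'.1 with hlt | heq | hlt
    · exact absurd (by rw [h.2.1]) (h'.2.2 _ h.1 hlt)
    · exact heq
    · exact absurd (by rw [h'.2.1]) (h.2.2 _ h'.1 hlt)
  have h2 := h.2.1
  rw [h1, h'.2.1] at h2
  have h3 : (b'.2 : ZMod r) = b.2 := by simpa using h2
  rw [ZMod.natCast_eq_natCast_iff'] at h3
  rw [Nat.mod_eq_of_lt hb, Nat.mod_eq_of_lt hb'] at h3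
  exact Prod.ext h1 h3.symm

lemma OnCycle.conj {g h : Equiv.Perm (ℕ × ZMod r)} (hh : Equivariant n h) {b : ℕ × ℕ}
    {x : ℕ × ZMod r} (hx : OnCycle g b x) : OnCycle (h * g * h⁻¹) b (h x) := by
  have hpow : ∀ j, ((h * g * h⁻¹) ^ j) (h x) = h ((g ^ j) x) := fun j => by
    rw [conj_pow]; simp
  refine ⟨hx.1, ?_, fun j h1 h2 heq => hx.2.2 j h1 h2 ?_⟩
  · rw [hpow, hx.2.1, hh.1]
  · rw [hpow] at heq
    set y := (g ^ j) x
    have h3 : h y = h (x.1, x.2 + ((h y).2 - (h x).2)) := by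
      rw [hh.1]
      ext <;> simp [heq]
    rw [h.injective h3]

open Classical in
/-- The number of points of the first `n` coordinates on cycles of type `b`. -/
def cycleCount (n : ℕ) [NeZero r] (g : Equiv.Perm (ℕ × ZMod r)) (b : ℕ × ℕ) : ℕ :=
  ((Finset.range n ×ˢ (Finset.univ : Finset (ZMod r))).filter (OnCycle g b)).card

lemma cycleCount_le_of_isConj [NeZero r] {w w' : W r n} (h : IsConj w w') (b : ℕ × ℕ) :
    cycleCount n (rep r n w) b ≤ cycleCount n (rep r n w') b := by
  classical
  obtain ⟨c, rfl⟩ := isConj_iff.mp h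
  have hc := equivariant_rep (Nat.one_le_iff_ne_zero.mpr (NeZero.ne r)) c
  refine Finset.card_le_card_of_injOn (rep r n c) ?_ (rep r n c).injective.injOn
  intro x hx
  simp only [Finset.coe_filter, Finset.mem_product, Finset.mem_range, Finset.mem_univ, and_true,
    Set.mem_ofPred_eq] at hx ⊢
  refine ⟨hc.2 x hx.1, ?_⟩
  rw [map_mul, map_mul, map_inv]
  exact hx.2.conj hc

lemma rep_run {m k : ℕ} (h : m + k < n) (x : ℕ × ZMod r) :
    rep r n (wprod r n (List.range' (m + 1) k)) x =
      (if x.1 < m then x.1 else if x.1 < m + k then x.1 + 1 else if x.1 = m + k then m else x.1,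
        x.2) := by
  induction k generalizing x with
  | zero =>
    ext
    · simp; split_ifs <;> omega
    · simp
  | succ k ih =>
    rw [List.range'_1_concat, wprod_append, map_mul, Equiv.Perm.mul_apply, wprod_cons, wprod_nil,
      mul_one, rep_gen, genPerm_pos (by omega) (by omega), ih (by omega), sPerm_apply]
    ext
    · simp only; split_ifs <;> omega
    · rfl

lemma rep_Tw {m c : ℕ} (h : m < n) (x : ℕ × ZMod r) :
    rep r n (wprod r n (Tw m c)) x = (x.1, if x.1 = m then x.2 + c else x.2) := by
  induction m generalizing x with
  | zero =>
    simp [Tw, wprod_replicate, genPerm_zero (r := r) (n := n) (by omega), tPerm_pow_apply]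
  | succ m ih =>
    rw [Tw_succ, wprod_cons, wprod_append, wprod_cons, wprod_nil, mul_one, map_mul, map_mul,
      Equiv.Perm.mul_apply, Equiv.Perm.mul_apply, rep_gen, genPerm_pos (by omega) (by omega),
      ih (by omega), sPerm_apply, sPerm_apply]
    ext
    · simp only; split_ifs <;> omega
    · simp only; split_ifs <;> first | rfl | omega

lemma rep_block {m lam c : ℕ} (hlam : 0 < lam) (h : m + lam ≤ n) (x : ℕ × ZMod r) :
    rep r n (wprod r n (block m (lam, c))) x =
      if x.1 < m then x else if x.1 + 1 < m + lam then (x.1 + 1, x.2) else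
        if x.1 + 1 = m + lam then (m, x.2 + c) else x := by
  have h1 : rep r n (wprod r n (if c = 0 then [] else Tw m c)) =
      rep r n (wprod r n (Tw m c)) := by
    split_ifs with hc
    · subst hc
      ext x <;> simp [rep_Tw (show m < n by omega)]
    · rfl
  rw [block, wprod_append, map_mul, Equiv.Perm.mul_apply, rep_run (by simp; omega), h1,
    rep_Tw (by omega)]
  simp only
  split_ifs <;> first | rfl | omega

lemma rep_bw_fix {m : ℕ} {l : List (ℕ × ℕ)} (hl : Valid r l) (h : m + size l ≤ n)
    {x : ℕ × ZMod r} (hx : x.1 < m) : rep r n (wprod r n (bw m l)) x = x := by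
  induction l generalizing m with
  | nil => simp [bw]
  | cons b l ih =>
    have hb := (hl b (by simp)).1
    rw [size_cons] at h
    rw [bw, wprod_append, map_mul, Equiv.Perm.mul_apply,
      ih (fun b' hb' => hl b' (by simp [hb'])) (by omega) (by omega),
      rep_block hb (by omega), if_pos hx]

lemma rep_bw_ge {m : ℕ} {l : List (ℕ × ℕ)} (hl : Valid r l) (h : m + size l ≤ n)
    {x : ℕ × ZMod r} (hx : m ≤ x.1) : m ≤ (rep r n (wprod r n (bw m l)) x).1 := by
  by_contra hlt
  have := rep_bw_fix hl h (not_le.mp hlt)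
  rw [(rep r n _).injective this] at hlt
  omega

/-- A block makes its coordinates into a single cycle. -/
lemma onCycle_of_block {g : Equiv.Perm (ℕ × ZMod r)} {m lam c : ℕ} (hlam : 0 < lam)
    (hg : ∀ x : ℕ × ZMod r, m ≤ x.1 → x.1 < m + lam →
      g x = if x.1 + 1 < m + lam then (x.1 + 1, x.2) else (m, x.2 + c))
    {x : ℕ × ZMod r} (h1 : m ≤ x.1) (h2 : x.1 < m + lam) : OnCycle g (lam, c) x := by
  have key : ∀ j, j ≤ lam → (g ^ j) x =
      if x.1 + j < m + lam then (x.1 + j, x.2) else (x.1 + j - lam, x.2 + c) := by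
    intro j
    induction j with
    | zero => intro _; simp [h2]
    | succ j ih =>
      intro hj
      rw [pow_succ', Equiv.Perm.mul_apply, ih (by omega)]
      by_cases h3 : x.1 + j < m + lam
      · rw [if_pos h3, hg _ (by simp; omega) (by simpa using h3)]
        by_cases h4 : x.1 + (j + 1) < m + lam
        · rw [if_pos h4, if_pos (by simp; omega)]
          rfl
        · rw [if_neg h4, if_neg (by simp; omega)]
          ext
          · simp; omega
          · rfl
      · rw [if_neg h3, hg _ (by simp; omega) (by simp; omega), if_pos (by simp; omega),
          if_neg (by omega)]
        ext
        · simp; omega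
        · rfl
  refine ⟨hlam, ?_, fun j hj1 hj2 => ?_⟩
  · rw [key lam le_rfl, if_neg (by omega)]
    simp
  · rw [key j (by simp at hj2; omega)]
    simp at hj2
    split_ifs <;> simp <;> omega

open Classical in
/-- Each block `b` of a product of blocks contributes its `b.1 * r` points to the count of points on
cycles of type `b`. The permutation `g` need only agree with the product on the coordinates covered
by the blocks. -/
lemma card_onCycle [NeZero r] {b : ℕ × ℕ} (hb : b.2 < r) {l : List (ℕ × ℕ)} (hl : Valid r l)
    {m : ℕ} (h : m + size l ≤ n) {g : Equiv.Perm (ℕ × ZMod r)}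
    (hg : ∀ x : ℕ × ZMod r, m ≤ x.1 → x.1 < m + size l → g x = rep r n (wprod r n (bw m l)) x) :
    ((Finset.Ico m (m + size l) ×ˢ (Finset.univ : Finset (ZMod r))).filter (OnCycle g b)).card =
      b.1 * r * l.count b := by
  induction l generalizing m with
  | nil => simp
  | cons b' l ih =>
    obtain ⟨lam, c⟩ := b'
    have hb' := hl (lam, c) (by simp)
    have hl' : Valid r l := fun b' hb' => hl b' (by simp [hb'])
    simp only [size_cons] at h hg hb' ⊢
    have h1 : ∀ x : ℕ × ZMod r, m ≤ x.1 → x.1 < m + lam → OnCycle g (lam, c) x := by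
      intro x hx1 hx2
      refine onCycle_of_block hb'.1 (fun y hy1 hy2 => ?_) hx1 hx2
      rw [hg y hy1 (by omega), bw, wprod_append, map_mul, Equiv.Perm.mul_apply,
        rep_bw_fix hl' (by omega) hy2, rep_block hb'.1 (by omega), if_neg (by omega)]
      split_ifs <;> first | rfl | omega
    have h2 := ih hl' (m := m + lam) (by omega) (fun x hx1 hx2 => by
      have hge : m + lam ≤ (rep r n (wprod r n (bw (m + lam) l)) x).1 :=
        rep_bw_ge hl' (by omega) hx1
      rw [hg x (by omega) (by omega), bw, wprod_append, map_mul, Equiv.Perm.mul_apply,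
        rep_block hb'.1 (by omega)]
      simp only
      rw [if_neg (by omega), if_neg (by omega), if_neg (by omega)])
    have h3 : Finset.Ico m (m + (lam + size l)) =
        (Finset.Ico m (m + lam)).disjUnion (Finset.Ico (m + lam) (m + lam + size l))
          (Finset.Ico_disjoint_Ico_consecutive _ _ _) := by
      rw [Finset.disjUnion_eq_union, Finset.Ico_union_Ico_eq_Ico (by omega) (by omega),
        Nat.add_assoc]
    rw [h3, Finset.disjUnion_eq_union, Finset.union_product, Finset.filter_union,
      Finset.card_union_of_disjoint, h2, List.count_cons]
    · by_cases hbb : b = (lam, c)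
      · subst hbb
        rw [Finset.filter_true_of_mem]
        · simp [Finset.card_product, ZMod.card]; ring
        · intro x hx
          simp at hx
          exact h1 x hx.1 hx.2
      · rw [Finset.filter_false_of_mem]
        · have : ((lam, c) == b) = false := by simpa using Ne.symm hbb
          simp [this]
        · intro x hx hx'
          simp at hx
          exact hbb (hx'.unique hb hb'.2 (h1 x hx.1 hx.2))
    · refine Finset.disjoint_filter_filter (Finset.disjoint_product.mpr (Or.inl ?_))
      exact Finset.Ico_disjoint_Ico_consecutive _ _ _

/-- The cycle type of a product of blocks is a conjugacy invariant. -/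
lemma perm_of_isConj [NeZero r] {l l' : List (ℕ × ℕ)} (hl : Valid r l) (hl' : Valid r l')
    (hs : size l = n) (hs' : size l' = n)
    (h : IsConj (wprod r n (bw 0 l)) (wprod r n (bw 0 l'))) : l.Perm l' := by
  classical
  rw [List.perm_iff_count]
  intro b
  by_cases hb : 0 < b.1 ∧ b.2 < r
  · have count_eq : ∀ l : List (ℕ × ℕ), Valid r l → size l = n →
        cycleCount n (rep r n (wprod r n (bw 0 l))) b = b.1 * r * l.count b := by
      intro l hl hs
      have := card_onCycle hb.2 hl (m := 0) (n := n) (by omega) (fun _ _ _ => rfl)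
      rw [Nat.zero_add, hs, ← Finset.range_eq_Ico] at this
      exact this
    have heq := le_antisymm (cycleCount_le_of_isConj h b) (cycleCount_le_of_isConj h.symm b)
    rw [count_eq l hl hs, count_eq l' hl' hs'] at heq
    exact Nat.eq_of_mul_eq_mul_left
      (Nat.mul_pos hb.1 (Nat.pos_of_ne_zero (NeZero.ne r))) heq
  · have h0 : ∀ l : List (ℕ × ℕ), Valid r l → l.count b = 0 := fun l hl =>
      List.count_eq_zero_of_not_mem fun h => hb (hl b h)
    rw [h0 l' hl', h0 l hl]

/-! ### Lengths of sorted products of blocks -/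

/-- The sum of `g b b'` over all pairs of entries of a list, the first standing before the
second. -/
def pairSum (g : ℕ × ℕ → ℕ × ℕ → ℕ) : List (ℕ × ℕ) → ℕ
  | [] => 0
  | b :: l => (l.map (g b)).sum + pairSum g l

lemma pairSum_perm {g : ℕ × ℕ → ℕ × ℕ → ℕ} (hg : ∀ b b', g b b' = g b' b) {l l' : List (ℕ × ℕ)}
    (h : l.Perm l') : pairSum g l = pairSum g l' := by
  induction h with
  | nil => rfl
  | cons b h ih => simp [pairSum, ih, (h.map (g b)).sum_eq]
  | swap b b' l => simp [pairSum, hg b b']; ring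
  | trans _ _ ih ih' => exact ih.trans ih'

lemma length_bw (m : ℕ) (l : List (ℕ × ℕ)) :
    (bw m l).length = (l.map fun b => b.1 - 1 + b.2 + if b.2 = 0 then 0 else 2 * m).sum +
      pairSum (fun b b' => if b'.2 = 0 then 0 else 2 * b.1) l := by
  induction l generalizing m with
  | nil => rfl
  | cons b l ih =>
    have h1 : (l.map fun b' => b'.1 - 1 + b'.2 + if b'.2 = 0 then 0 else 2 * (m + b.1)).sum =
        (l.map fun b' => b'.1 - 1 + b'.2 + if b'.2 = 0 then 0 else 2 * m).sum +
          (l.map fun b' => if b'.2 = 0 then 0 else 2 * b.1).sum := by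
      rw [← List.sum_map_add]
      congr 2
      funext b'
      split_ifs <;> omega
    have h2 : (block m b).length = b.1 - 1 + b.2 + if b.2 = 0 then 0 else 2 * m := by
      rw [block]
      split_ifs with h <;> simp [h, Tw_length]
      omega
    rw [bw, List.length_append, ih, h1, h2, List.map_cons, List.sum_cons, pairSum]
    omega

lemma pairSum_congr {R : ℕ × ℕ → ℕ × ℕ → Prop} {g g' : ℕ × ℕ → ℕ × ℕ → ℕ}
    (hR : ∀ b b', R b b' → g b b' = g' b b') {l : List (ℕ × ℕ)} (h : l.Pairwise R) :
    pairSum g l = pairSum g' l := by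
  induction h with
  | nil => rfl
  | cons h _ ih =>
    rw [pairSum, pairSum, ih]
    congr 2
    exact List.map_congr_left fun d hd => hR _ _ (h d hd)

/-- Sorted lists of blocks that are permutations of each other give words of the same length: the
interaction `2λ` of a block with a later coloured block becomes the symmetric `2 min(λ, λ')`. -/
lemma length_bw_perm {l l' : List (ℕ × ℕ)} (h : l.Perm l') (hl : l.Pairwise BlockLe)
    (hl' : l'.Pairwise BlockLe) : (bw 0 l).length = (bw 0 l').length := by
  have hR : ∀ b b' : ℕ × ℕ, BlockLe b b' → (if b'.2 = 0 then 0 else 2 * b.1) =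
      if b.2 = 0 ∨ b'.2 = 0 then 0 else 2 * min b.1 b'.1 := by
    intro b b' hbb
    unfold BlockLe at hbb
    split_ifs <;> omega
  rw [length_bw, length_bw, pairSum_congr hR hl, pairSum_congr hR hl', (h.map _).sum_eq,
    pairSum_perm ?_ h]
  intro b b'
  simp only [or_comm, min_comm]

end CRG

open CRG in
/-- For any conjugacy class `C` of `W_n` and any `w ∈ C`, there exists an
element `w' ∈ C_min` (the set of minimal length elements of `C`) such that `w → w'`. -/
theorem minimal_length_conjugate (r n : ℕ) (hr : 1 ≤ r) (hn : 1 ≤ n) (w : W r n) :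
    ∃ w' : W r n, IsConj w w' ∧ (∀ u : W r n, IsConj w u → ell r n w' ≤ ell r n u) ∧
      Arrow r n w w' := by
  have : NeZero r := ⟨by omega⟩
  obtain ⟨l, h1, h2, h3, h4, h5⟩ := exists_sorted hr w
  refine ⟨_, h4.isConj, fun u hu => ?_, h4⟩
  obtain ⟨l', g1, g2, g3, g4, g5⟩ := exists_sorted hr u
  have hconj := h4.isConj.symm.trans (hu.trans g4.isConj)
  rw [h5, length_bw_perm (perm_of_isConj h1 g1 h2 g2 hconj) h3 g3, ← g5]
  exact g4.ell_le
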